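/- For all x, y ∈ ℝ, lim_{n→∞} n·P(X > a_n·x + b_n, ρ_n|X| + √(1-ρ_n²)·Y > a_n·y + b_n) = e^{-max(x,y)}. -/

import Mathlib

open MeasureTheory Filter Real Set ProbabilityTheory Topology

/-!
In polar coordinates the joint exceedance probability is an average over the angle `θ` of tail
probabilities of `R`: near `θ = 0` the two conditions say that `R` exceeds both
`(a x + b) / cos θ` and `(a y + b) / (ρ cos θ + √(1 - ρ²) sin θ)`. Since `b / a → ∞`, the relevant
angles are `θ = √(2 a / b) φ`. On this scale `cos θ = 1 - (a / b) φ² + o(a / b)`, and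
`(1 - ρ) b / a → 0` makes the second denominator have the same expansion, so the tail probability
is asymptotic to `P(R > b) exp (-(max x y + φ²))`. A bound `P(R > b + a t) ≤ 3 P(R > b) / (2 + t)`,
obtained by iterating the Gumbel condition, dominates the integrand. The marginal tail `P(X > b)`
has the same normalisation and the limit with `max x y` replaced by `0`, so the ratio of the two
tends to `exp (-max x y)`. Since `X` has no atoms, `P(X > b_n) = 1 / n`, which is the claim.
-/

/-- The filter `u ↑ x_F` of left approach to the upper endpoint `x_F = sup {u | 0 < H u}` of the
law with survival function `H`. Taking `atTop` on `{u | 0 < H u}` covers finite and infinite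
endpoints at once. -/
def upperEndpointFilter (H : ℝ → ℝ) : Filter ℝ :=
  map (↑) (atTop : Filter {u : ℝ // 0 < H u})

section UpperEndpointFilter

variable {H : ℝ → ℝ}

lemma upperEndpointFilter_congr {H' : ℝ → ℝ} (h : ∀ u, 0 < H u ↔ 0 < H' u) :
    upperEndpointFilter H = upperEndpointFilter H' :=
  congrArg (fun P : ℝ → Prop ↦ map ((↑) : {u // P u} → ℝ) atTop) (funext fun u ↦ propext (h u))

lemma upperEndpointFilter_eq_atTop (h : ∀ u, 0 < H u) : upperEndpointFilter H = atTop :=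
  map_val_atTop_of_Ici_subset (a := 0) fun u _ ↦ h u

lemma upperEndpointFilter_eq_nhdsLT {c : ℝ} (h : ∀ u, 0 < H u ↔ u < c) :
    upperEndpointFilter H = 𝓝[<] c :=
  map_coe_atTop_of_Ioo_subset (fun u hu ↦ (h u).1 hu)
    fun u hu ↦ ⟨u, hu, fun v hv ↦ (h v).2 hv.2⟩

lemma upperEndpointFilter_one_sub_eq {F : ℝ → ℝ} {c : ℝ} {l : Filter ℝ}
    (h : (l = atTop ∧ ∀ x, F x < 1) ∨
      (l = 𝓝[<] c ∧ (∀ x < c, F x < 1) ∧ ∀ x, c ≤ x → F x = 1)) :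
    upperEndpointFilter (fun x ↦ 1 - F x) = l := by
  rcases h with ⟨rfl, hlt⟩ | ⟨rfl, hlt, heq⟩
  · exact upperEndpointFilter_eq_atTop fun u ↦ sub_pos.2 (hlt u)
  · refine upperEndpointFilter_eq_nhdsLT fun u ↦ ⟨fun hu ↦ ?_, fun hu ↦ sub_pos.2 (hlt u hu)⟩
    exact not_le.1 fun hcu ↦ (sub_pos.1 hu).ne (heq u hcu)

lemma eventually_pos_upperEndpointFilter : ∀ᶠ u in upperEndpointFilter H, 0 < H u :=
  eventually_map.2 (Eventually.of_forall Subtype.property)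

lemma eventually_upperEndpointFilter_forall_ge {P : ℝ → Prop}
    (h : ∀ᶠ u in upperEndpointFilter H, P u) :
    ∀ᶠ u in upperEndpointFilter H, ∀ v, u ≤ v → 0 < H v → P v := by
  rw [upperEndpointFilter, eventually_map] at h ⊢
  filter_upwards [eventually_forall_ge_atTop.2 h] with u hu v huv hv
  exact hu ⟨v, hv⟩ huv

lemma tendsto_upperEndpointFilter {ι : Type*} {L : Filter ι} {f : ι → ℝ}
    (hpos : ∀ᶠ i in L, 0 < H (f i)) (hge : ∀ U, 0 < H U → ∀ᶠ i in L, U ≤ f i) :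
    Tendsto f L (upperEndpointFilter H) := by
  obtain rfl | hL := L.eq_or_neBot
  · exact tendsto_bot
  intro s hs
  rw [mem_map]
  obtain ⟨i, hi⟩ := hpos.exists
  have : Nonempty {u : ℝ // 0 < H u} := ⟨⟨f i, hi⟩⟩
  obtain ⟨U, hU⟩ := mem_atTop_sets.1 hs
  filter_upwards [hpos, hge U U.2] with i hi hUi
  exact hU ⟨f i, hi⟩ hUi

end UpperEndpointFilter

-- Iterates `u ↦ u + α u`: each step halves `H`, while it multiplies the scale by at most `3 / 2`.
lemma le_div_two_add_mul_of_halving {H α : ℝ → ℝ} (hH : Antitone H) (hα : ∀ u, 0 < α u) {U : ℝ}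
    (hstep : ∀ u, U ≤ u → 0 < H u →
      H (u + α u) ≤ H u / 2 ∧ 0 < H (u + α u) ∧ α (u + α u) ≤ 3 / 2 * α u)
    {u t : ℝ} (hUu : U ≤ u) (hu : 0 < H u) (ht : 0 ≤ t) :
    H (u + α u * t) ≤ 3 / (2 + t) * H u := by
  obtain ⟨k, hk⟩ := exists_nat_ge t
  induction k generalizing u t with
  | zero =>
    obtain rfl : t = 0 := le_antisymm (by simpa using hk) ht
    rw [mul_zero, add_zero]
    linarith
  | succ k ih =>
    rcases le_total t 1 with ht1 | ht1
    · calc H (u + α u * t) ≤ 1 * H u := by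
            rw [one_mul]
            exact hH (le_add_of_nonneg_right (mul_nonneg (hα u).le ht))
        _ ≤ 3 / (2 + t) * H u := by
            gcongr
            rw [one_le_div (by linarith)]
            linarith
    obtain ⟨hhalf, hpos, hscale⟩ := hstep u hUu hu
    push_cast at hk
    calc H (u + α u * t)
        ≤ H (u + α u + α (u + α u) * ((t - 1) * (2 / 3))) := hH (by nlinarith)
      _ ≤ 3 / (2 + (t - 1) * (2 / 3)) * H (u + α u) :=
          ih (by linarith [hα u]) hpos (by linarith) (by linarith)
      _ ≤ 3 / (2 + (t - 1) * (2 / 3)) * (H u / 2) := by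
          gcongr
      _ = 3 / ((2 + (t - 1) * (2 / 3)) * 2) * H u := by rw [← div_div]; ring
      _ ≤ 3 / (2 + t) * H u := by gcongr; linarith

/-- `H` is the survival function of a law in the Gumbel max-domain of attraction with auxiliary
function `α`, the reciprocal of the scaling function `w`. -/
def IsGumbelTail (H α : ℝ → ℝ) : Prop :=
  ∀ s, Tendsto (fun u ↦ H (u + α u * s) / H u) (upperEndpointFilter H) (𝓝 (exp (-s)))

namespace IsGumbelTail

variable {H α : ℝ → ℝ}

lemma eventually_pos_add_mul (h : IsGumbelTail H α) (s : ℝ) :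
    ∀ᶠ u in upperEndpointFilter H, 0 < H (u + α u * s) := by
  filter_upwards [eventually_pos_upperEndpointFilter, (h s).eventually_const_lt (exp_pos _)]
    with u hu hratio
  exact (div_pos_iff_of_pos_right hu).1 hratio

lemma tendsto_add_mul (h : IsGumbelTail H α) (hα : ∀ u, 0 < α u) {s : ℝ} (hs : 0 ≤ s) :
    Tendsto (fun u ↦ u + α u * s) (upperEndpointFilter H) (upperEndpointFilter H) := by
  refine tendsto_upperEndpointFilter (h.eventually_pos_add_mul s) fun U hU ↦ ?_
  have hge : ∀ᶠ u in upperEndpointFilter H, U ≤ u :=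
    eventually_map.2 (eventually_ge_atTop (⟨U, hU⟩ : {u : ℝ // 0 < H u}))
  filter_upwards [hge] with u hu
  exact le_add_of_le_of_nonneg hu (mul_nonneg (hα u).le hs)

lemma eventually_le_half (h : IsGumbelTail H α) :
    ∀ᶠ u in upperEndpointFilter H, H (u + α u) ≤ H u / 2 := by
  have hexp : exp (-1) < 1 / 2 := by
    rw [exp_neg, ← one_div]
    exact one_div_lt_one_div_of_lt two_pos (by linarith [exp_one_gt_d9])
  filter_upwards [eventually_pos_upperEndpointFilter, (h 1).eventually_lt_const hexp] with u hu hlt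
  rw [mul_one, div_lt_iff₀ hu] at hlt
  linarith

-- If `α (u + α u)` exceeded `3 / 2 * α u`, then `H (u + α u + α (u + α u)) / H (u + α u) ∼ e⁻¹`
-- would be at most `H (u + 5 / 2 * α u) / H (u + α u) ∼ exp (-3 / 2)`.
lemma eventually_scale_add_le (h : IsGumbelTail H α) (hH : Antitone H) (hα : ∀ u, 0 < α u) :
    ∀ᶠ u in upperEndpointFilter H, α (u + α u) ≤ 3 / 2 * α u := by
  have hshift : Tendsto (fun u ↦ H (u + α u + α (u + α u)) / H (u + α u))
      (upperEndpointFilter H) (𝓝 (exp (-1))) := by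
    have := (h 1).comp (h.tendsto_add_mul hα zero_le_one)
    simpa only [Function.comp_def, mul_one] using this
  have hfar : Tendsto (fun u ↦ H (u + α u * (5 / 2)) / H (u + α u))
      (upperEndpointFilter H) (𝓝 (exp (-(5 / 2)) / exp (-1))) := by
    refine ((h (5 / 2)).div (h 1) (exp_pos _).ne').congr' ?_
    filter_upwards [eventually_pos_upperEndpointFilter] with u hu
    simp only [Pi.div_apply, mul_one, div_div_div_cancel_right₀ hu.ne']
  have hexp : exp (-(5 / 2)) / exp (-1) < exp (-1) := by
    rw [← exp_sub]
    exact exp_lt_exp.2 (by norm_num)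
  filter_upwards [hfar.eventually_lt hshift hexp, h.eventually_pos_add_mul 1] with u hlt hpos
  rw [mul_one] at hpos
  contrapose! hlt
  exact div_le_div_of_nonneg_right (hH (by linarith)) hpos.le

lemma eventually_le_div_two_add (h : IsGumbelTail H α) (hH : Antitone H) (hα : ∀ u, 0 < α u) :
    ∀ᶠ u in upperEndpointFilter H, ∀ t, 0 ≤ t → H (u + α u * t) ≤ 3 / (2 + t) * H u := by
  have hstep := eventually_upperEndpointFilter_forall_ge <| h.eventually_le_half.and <|
    (h.eventually_pos_add_mul 1).and (h.eventually_scale_add_le hH hα)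
  simp only [mul_one] at hstep
  filter_upwards [hstep, eventually_pos_upperEndpointFilter] with u hstep hu t ht
  exact le_div_two_add_mul_of_halving hH hα hstep le_rfl hu ht

lemma exists_eventually_le_div_one_add (h : IsGumbelTail H α) (hH : Antitone H)
    (hα : ∀ u, 0 < α u) (x : ℝ) :
    ∃ K > 0, ∀ᶠ u in upperEndpointFilter H, ∀ s, 0 ≤ s →
      H (u + α u * (x + s)) ≤ K / (1 + s) * H u := by
  refine ⟨(exp (-x) + 1) * (1 + 2 * |x|) + 6, by positivity, ?_⟩
  filter_upwards [eventually_pos_upperEndpointFilter, h.eventually_le_div_two_add hH hα,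
    (h x).eventually_lt_const (lt_add_one _)] with u hu hdecay hx s hs
  have hαu := hα u
  rcases le_total s (2 * |x|) with hsx | hsx
  · calc H (u + α u * (x + s)) ≤ H (u + α u * x) := hH (by gcongr; linarith)
      _ ≤ (exp (-x) + 1) * H u := ((div_lt_iff₀ hu).1 hx).le
      _ ≤ ((exp (-x) + 1) * (1 + 2 * |x|) + 6) / (1 + s) * H u := by
          gcongr
          rw [le_div_iff₀ (by positivity)]
          nlinarith [exp_pos (-x)]
  · calc H (u + α u * (x + s)) ≤ H (u + α u * (s / 2)) :=
          hH (by gcongr; linarith [neg_abs_le x])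
      _ ≤ 3 / (2 + s / 2) * H u := hdecay _ (by positivity)
      _ ≤ ((exp (-x) + 1) * (1 + 2 * |x|) + 6) / (1 + s) * H u := by
          gcongr ?_ * H u
          rw [div_le_div_iff₀ (by positivity) (by positivity)]
          nlinarith [show 0 ≤ (exp (-x) + 1) * (1 + 2 * |x|) by positivity]

lemma tendsto_zero (h : IsGumbelTail H α) (hH : Antitone H) :
    Tendsto H (upperEndpointFilter H) (𝓝 0) := by
  obtain hbot | hne := (upperEndpointFilter H).eq_or_neBot
  · rw [hbot]; exact tendsto_bot
  have hbdd : BddBelow (range fun u : {u : ℝ // 0 < H u} ↦ H u) :=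
    ⟨0, forall_mem_range.2 fun u ↦ u.2.le⟩
  have hlim : Tendsto H (upperEndpointFilter H) (𝓝 (⨅ u : {u : ℝ // 0 < H u}, H u)) :=
    tendsto_map'_iff.2 (tendsto_atTop_ciInf (fun u v huv ↦ hH huv) hbdd)
  have hnonneg : 0 ≤ ⨅ u : {u : ℝ // 0 < H u}, H u := Real.iInf_nonneg fun u ↦ u.2.le
  have hhalf : ⨅ u : {u : ℝ // 0 < H u}, H u ≤ (⨅ u : {u : ℝ // 0 < H u}, H u) / 2 := by
    refine ge_of_tendsto (hlim.div_const 2) ?_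
    filter_upwards [h.eventually_le_half, h.eventually_pos_add_mul 1] with u hle hpos
    rw [mul_one] at hpos
    exact (ciInf_le hbdd ⟨_, hpos⟩).trans hle
  rwa [show ⨅ u : {u : ℝ // 0 < H u}, H u = 0 by linarith] at hlim

lemma tendsto_div_scale_atTop (h : IsGumbelTail H α) (hH : Antitone H) (hα : ∀ u, 0 < α u)
    (h0 : 0 < H 0) : Tendsto (fun u ↦ u / α u) (upperEndpointFilter H) atTop := by
  refine tendsto_atTop.2 fun C ↦ ?_
  have hlim := (h (-C)).mul (h.tendsto_zero hH)
  rw [mul_zero] at hlim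
  filter_upwards [hlim.eventually_lt_const h0, eventually_pos_upperEndpointFilter] with u hlt hu
  rw [div_mul_cancel₀ _ hu.ne'] at hlt
  rw [le_div_iff₀ (hα u)]
  linarith [hH.reflect_lt hlt]

lemma tendsto_div_prod_nhds (h : IsGumbelTail H α) (hH : Antitone H) (hα : ∀ u, 0 < α u) (t : ℝ) :
    Tendsto (fun p : ℝ × ℝ ↦ H (p.1 + α p.1 * p.2) / H p.1)
      (upperEndpointFilter H ×ˢ 𝓝 t) (𝓝 (exp (-t))) := by
  have hcont : Tendsto (fun s ↦ exp (-s)) (𝓝 t) (𝓝 (exp (-t))) :=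
    (continuous_exp.comp continuous_neg).tendsto t
  have hmono : ∀ u r s, 0 < H u → r ≤ s → H (u + α u * s) / H u ≤ H (u + α u * r) / H u :=
    fun u r s hu hrs ↦ div_le_div_of_nonneg_right (hH (by gcongr; exact (hα u).le)) hu.le
  refine tendsto_order.2 ⟨fun c hc ↦ ?_, fun c hc ↦ ?_⟩
  · obtain ⟨s, hcs, hts⟩ := ((hcont.eventually_const_lt hc).filter_mono nhdsWithin_le_nhds
      |>.and (self_mem_nhdsWithin (s := Ioi t))).exists
    filter_upwards [(eventually_pos_upperEndpointFilter.and
      ((h s).eventually_const_lt hcs)).prod_mk (eventually_lt_nhds hts)] with p ⟨⟨hu, hlt⟩, hp⟩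
    exact hlt.trans_le (hmono _ _ _ hu hp.le)
  · obtain ⟨s, hcs, hts⟩ := ((hcont.eventually_lt_const hc).filter_mono nhdsWithin_le_nhds
      |>.and (self_mem_nhdsWithin (s := Iio t))).exists
    filter_upwards [(eventually_pos_upperEndpointFilter.and
      ((h s).eventually_lt_const hcs)).prod_mk (eventually_gt_nhds hts)] with p ⟨⟨hu, hlt⟩, hp⟩
    exact (hmono _ _ _ hu hp.le).trans_lt hlt

end IsGumbelTail

section AngularScaling

variable {ι : Type*} {L : Filter ι} {q : ι → ℝ}

lemma mul_sinc_self (z : ℝ) : z * sinc z = sin z := by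
  rcases eq_or_ne z 0 with rfl | hz
  · simp
  · rw [sinc_of_ne_zero hz, mul_div_cancel₀ _ hz]

lemma one_sub_cos_eq_sq_mul_sinc_sq (z : ℝ) : 1 - cos z = z ^ 2 / 2 * sinc (z / 2) ^ 2 := by
  have hcos : cos z = 1 - 2 * sin (z / 2) ^ 2 := by
    rw [← mul_div_cancel₀ z two_ne_zero, cos_two_mul, cos_sq', mul_div_cancel₀ z two_ne_zero]
    ring
  rw [hcos, ← mul_sinc_self]
  ring

lemma tendsto_sqrt_two_div_mul (hq : Tendsto q L atTop) (φ : ℝ) :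
    Tendsto (fun i ↦ √(2 / q i) * φ) L (𝓝 0) := by
  simpa using ((hq.const_div_atTop 2).sqrt).mul_const φ

lemma tendsto_mul_one_sub_cos (hq : Tendsto q L atTop) (φ : ℝ) :
    Tendsto (fun i ↦ q i * (1 - cos (√(2 / q i) * φ))) L (𝓝 (φ ^ 2)) := by
  have hsinc : Tendsto (fun i ↦ sinc (√(2 / q i) * φ / 2)) L (𝓝 1) := by
    have := (tendsto_sqrt_two_div_mul hq φ).div_const 2
    rw [zero_div] at this
    simpa only [Function.comp_def, sinc_zero] using (continuous_sinc.tendsto 0).comp this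
  have hlim := (hsinc.pow 2).const_mul (φ ^ 2)
  rw [one_pow, mul_one] at hlim
  refine hlim.congr' ?_
  filter_upwards [hq.eventually_gt_atTop 0] with i hi
  rw [one_sub_cos_eq_sq_mul_sinc_sq, mul_pow, sq_sqrt (by positivity)]
  field_simp

lemma tendsto_mul_sin_zero (hq : Tendsto q L atTop) {τ : ι → ℝ}
    (hτ : Tendsto (fun i ↦ τ i ^ 2 * q i) L (𝓝 0)) (φ : ℝ) :
    Tendsto (fun i ↦ q i * (τ i * sin (√(2 / q i) * φ))) L (𝓝 0) := by
  have hbound : Tendsto (fun i ↦ √(τ i ^ 2 * q i * 2) * |φ|) L (𝓝 0) := by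
    simpa using ((hτ.mul_const 2).sqrt).mul_const |φ|
  refine squeeze_zero_norm' ?_ hbound
  filter_upwards [hq.eventually_gt_atTop 0] with i hi
  have hsqrt : √(τ i ^ 2 * q i * 2) = q i * (|τ i| * √(2 / q i)) := by
    rw [← sqrt_sq_eq_abs, ← sqrt_mul (sq_nonneg _), ← sqrt_sq hi.le, ← sqrt_mul (sq_nonneg _),
      sqrt_sq hi.le]
    congr 1
    field_simp
  calc ‖q i * (τ i * sin (√(2 / q i) * φ))‖
      = q i * (|τ i| * |sin (√(2 / q i) * φ)|) := by
        rw [norm_eq_abs, abs_mul, abs_mul, abs_of_pos hi]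
    _ ≤ q i * (|τ i| * |√(2 / q i) * φ|) := 
        mul_le_mul_of_nonneg_left (mul_le_mul_of_nonneg_left abs_sin_le_abs (abs_nonneg _)) hi.le
    _ = √(τ i ^ 2 * q i * 2) * |φ| := by
        rw [hsqrt, abs_mul, abs_of_nonneg (sqrt_nonneg _)]
        ring

lemma tendsto_mul_one_sub_cos_add_sin (hq : Tendsto q L atTop) {ρ τ : ι → ℝ}
    (hρ : Tendsto (fun i ↦ (1 - ρ i) * q i) L (𝓝 0))
    (hτ : Tendsto (fun i ↦ τ i ^ 2 * q i) L (𝓝 0)) (φ : ℝ) :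
    Tendsto (fun i ↦ q i * (1 - (ρ i * cos (√(2 / q i) * φ) + τ i * sin (√(2 / q i) * φ))))
      L (𝓝 (φ ^ 2)) := by
  have hcos : Tendsto (fun i ↦ cos (√(2 / q i) * φ)) L (𝓝 1) := by
    simpa only [Function.comp_def, cos_zero] using
      (continuous_cos.tendsto 0).comp (tendsto_sqrt_two_div_mul hq φ)
  have hlim := ((hρ.mul hcos).add (tendsto_mul_one_sub_cos hq φ)).sub (tendsto_mul_sin_zero hq hτ φ)
  rw [zero_mul, zero_add, sub_zero] at hlim
  exact hlim.congr fun i ↦ by ring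

lemma tendsto_sqrt_one_sub_sq_sq_mul_zero {ρ : ι → ℝ} (hle : ∀ i, |ρ i| ≤ 1)
    (hρ : Tendsto (fun i ↦ (1 - ρ i) * q i) L (𝓝 0)) :
    Tendsto (fun i ↦ √(1 - ρ i ^ 2) ^ 2 * q i) L (𝓝 0) := by
  have hbound := hρ.norm.const_mul 2
  rw [norm_zero, mul_zero] at hbound
  refine squeeze_zero_norm (fun i ↦ ?_) hbound
  calc ‖√(1 - ρ i ^ 2) ^ 2 * q i‖ = |1 + ρ i| * ‖(1 - ρ i) * q i‖ := by
        rw [sq_sqrt (sub_nonneg.2 ((sq_le_one_iff_abs_le_one _).2 (hle i))), ← norm_eq_abs,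
          ← norm_mul]
        ring_nf
    _ ≤ 2 * ‖(1 - ρ i) * q i‖ := by
        gcongr
        have := abs_le.1 (hle i)
        exact abs_le.2 ⟨by linarith, by linarith⟩

lemma tendsto_one_of_mul_one_sub (hq : Tendsto q L atTop) {D : ι → ℝ} {c : ℝ}
    (hD : Tendsto (fun i ↦ q i * (1 - D i)) L (𝓝 c)) : Tendsto D L (𝓝 1) := by
  have hlim := (hD.div_atTop hq).const_sub 1
  rw [sub_zero] at hlim
  refine hlim.congr' ?_
  filter_upwards [hq.eventually_gt_atTop 0] with i hi
  rw [mul_div_cancel_left₀ _ hi.ne', sub_sub_cancel]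

lemma tendsto_add_mul_one_sub_div (hq : Tendsto q L atTop) {D : ι → ℝ} {c : ℝ}
    (hD : Tendsto (fun i ↦ q i * (1 - D i)) L (𝓝 c)) (z : ℝ) :
    Tendsto (fun i ↦ (z + q i * (1 - D i)) / D i) L (𝓝 (z + c)) := by
  simpa only [div_one, Pi.div_apply] using!
    (hD.const_add z).div (tendsto_one_of_mul_one_sub hq hD) one_ne_zero

-- `π ^ 2 < 15` makes the constant `1 / 5` work on all of `(-π, π)`.
lemma mul_one_add_sq_div_lt_of_lt_mul_cos {θ r u : ℝ} (hθ : θ ∈ Ioo (-π) π) (hr : 0 < r)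
    (hu : 0 < u) (h : u < r * cos θ) : u * (1 + θ ^ 2 / 5) < r := by
  have hcos : cos θ ≤ 1 / √(θ ^ 2 + 1) :=
    cos_le_one_div_sqrt_sq_add_one (by linarith [hθ.1, pi_pos]) (by linarith [hθ.2, pi_pos])
  have hsqrt : 1 + θ ^ 2 / 5 ≤ √(θ ^ 2 + 1) := by
    have : θ ^ 2 ≤ 15 := by nlinarith [hθ.1, hθ.2, pi_lt_d2, pi_pos]
    exact le_sqrt_of_sq_le (by nlinarith [sq_nonneg θ])
  calc u * (1 + θ ^ 2 / 5) ≤ u * √(θ ^ 2 + 1) := by gcongr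
    _ < r * cos θ * √(θ ^ 2 + 1) := by gcongr
    _ ≤ r * (1 / √(θ ^ 2 + 1)) * √(θ ^ 2 + 1) := by gcongr
    _ = r := by field_simp

end AngularScaling

section Survival

lemma apply_sInf_setOf_lt_eq {C : ℝ → ℝ} (hC : Continuous C) {p : ℝ}
    (hne : {x | p < C x}.Nonempty) (hbdd : BddBelow {x | p < C x}) :
    C (sInf {x | p < C x}) = p := by
  refine le_antisymm ?_ ?_
  · have hclosure : sInf {x | p < C x} ∈ closure (Iio (sInf {x | p < C x})) := by
      rw [closure_Iio]
      exact self_mem_Iic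
    refine closure_minimal (fun z hz ↦ ?_) (isClosed_le hC continuous_const) hclosure
    have hnot : ¬p < C z := notMem_of_lt_csInf (s := {x | p < C x}) hz hbdd
    exact not_lt.1 hnot
  · exact closure_minimal (fun z hz ↦ le_of_lt hz) (isClosed_le continuous_const hC)
      (csInf_mem_closure hne hbdd)

/-- The survival function `t ↦ ν (t, ∞)` of a law `ν` on the line, real-valued like `cdf`. -/
noncomputable def survival (ν : Measure ℝ) (t : ℝ) : ℝ := ν.real (Ioi t)

variable {ν : Measure ℝ}

lemma survival_nonneg {t : ℝ} : 0 ≤ survival ν t := measureReal_nonneg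

lemma antitone_survival [IsFiniteMeasure ν] : Antitone (survival ν) :=
  fun _ _ hst ↦ measureReal_mono (Ioi_subset_Ioi hst)

variable [IsProbabilityMeasure ν]

lemma survival_eq_one_sub_cdf (t : ℝ) : survival ν t = 1 - cdf ν t := by
  rw [survival, ← compl_Iic, probReal_compl_eq_one_sub measurableSet_Iic, cdf_eq_real]

lemma survival_zero_pos (hν : ∀ᵐ r ∂ν, 0 < r) : 0 < survival ν 0 := by
  rw [survival, measureReal_def, (mem_ae_iff_prob_eq_one measurableSet_Ioi).1 hν,
    ENNReal.toReal_one]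
  exact one_pos

lemma continuous_cdf [NullSingletonClass ν] : Continuous (cdf ν) := by
  refine continuous_iff_continuousAt.2 fun t ↦ ?_
  have hatom : ENNReal.ofReal (cdf ν t - Function.leftLim (cdf ν) t) = 0 := by
    rw [← StieltjesFunction.measure_singleton, measure_cdf, measure_singleton]
  rw [ENNReal.ofReal_eq_zero, sub_nonpos] at hatom
  rw [(monotone_cdf ν).continuousAt_iff_leftLim_eq_rightLim, StieltjesFunction.rightLim_eq]
  exact le_antisymm ((monotone_cdf ν).leftLim_le le_rfl) hatom

lemma exists_lt_survival_pos {t : ℝ} (ht : 0 < survival ν t) : ∃ s > t, 0 < survival ν s := by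
  have hright : Tendsto (survival ν) (𝓝[>] t) (𝓝 (survival ν t)) := by
    simp only [funext survival_eq_one_sub_cdf]
    exact (((cdf ν).right_continuous t).mono Ioi_subset_Ici_self).const_sub 1
  exact (eventually_mem_nhdsWithin.and (hright.eventually_const_lt ht)).exists

lemma survival_quantile [NullSingletonClass ν] {p : ℝ} (hp : p ∈ Ioo 0 1) :
    survival ν (sInf {x | p < cdf ν x}) = 1 - p := by
  obtain ⟨t, ht⟩ := ((tendsto_cdf_atBot ν).eventually_lt_const hp.1).exists
  rw [survival_eq_one_sub_cdf, apply_sInf_setOf_lt_eq continuous_cdf]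
  · exact ((tendsto_cdf_atTop ν).eventually_const_lt hp.2).exists
  · exact ⟨t, fun x hx ↦ ((monotone_cdf ν).reflect_lt (ht.trans hx)).le⟩

lemma eventually_survival_quantile [NullSingletonClass ν] :
    ∀ᶠ n : ℕ in atTop, survival ν (sInf {x | 1 - 1 / (n : ℝ) < cdf ν x}) = 1 / n := by
  filter_upwards [eventually_gt_atTop 1] with n hn
  have hn' : (1 : ℝ) < n := by exact_mod_cast hn
  rw [survival_quantile, sub_sub_cancel]
  exact ⟨sub_pos.2 ((div_lt_one (by linarith)).2 hn'), sub_lt_self _ (by positivity)⟩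

lemma tendsto_quantile_upperEndpointFilter [NullSingletonClass ν] :
    Tendsto (fun n : ℕ ↦ sInf {x | 1 - 1 / (n : ℝ) < cdf ν x}) atTop
      (upperEndpointFilter (survival ν)) := by
  refine tendsto_upperEndpointFilter ?_ fun U hU ↦ ?_
  · filter_upwards [eventually_survival_quantile (ν := ν), eventually_gt_atTop 0] with n hn hn0
    rw [hn]
    positivity
  · have hsmall := (tendsto_const_div_atTop_nhds_zero_nat (1 : ℝ)).eventually_lt_const hU
    filter_upwards [eventually_survival_quantile (ν := ν), hsmall] with n hn hlt
    exact (antitone_survival.reflect_lt (hn.trans_lt hlt)).le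

end Survival

section PolarLaw

/-- The uniform law on `(-π, π)`, the law of the angle of a planar vector with rotation invariant
distribution. -/
noncomputable def angleLaw : Measure ℝ := (ENNReal.ofReal (2 * π))⁻¹ • volume.restrict (Ioo (-π) π)

instance : IsProbabilityMeasure angleLaw where
  measure_univ := by
    rw [angleLaw, Measure.smul_apply, Measure.restrict_apply_univ, volume_Ioo, sub_neg_eq_add,
      ← two_mul, smul_eq_mul, ENNReal.inv_mul_cancel (by simp [pi_pos]) ENNReal.ofReal_ne_top]

lemma ae_angleLaw_iff {P : ℝ → Prop} : (∀ᵐ θ ∂angleLaw, P θ) ↔ ∀ᵐ θ, θ ∈ Ioo (-π) π → P θ := by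
  rw [angleLaw, Measure.ae_ennreal_smul_measure_iff (ENNReal.inv_ne_zero.2 ENNReal.ofReal_ne_top),
    ae_restrict_iff' measurableSet_Ioo]

lemma ae_angleLaw_cos_ne (v : ℝ) : ∀ᵐ θ ∂angleLaw, cos θ ≠ v := by
  have hfinite : ∀ᵐ θ : ℝ, θ ∉ ({arccos v, -arccos v} : Set ℝ) :=
    compl_mem_ae_iff.2 ((toFinite _).measure_zero _)
  refine ae_angleLaw_iff.2 (hfinite.mono ?_)
  rintro θ hθ hmem rfl
  refine hθ ?_
  rw [← cos_abs, arccos_cos (abs_nonneg θ) (abs_le.2 ⟨hmem.1.le, hmem.2.le⟩)]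
  rcases abs_choice θ with h | h <;> simp [h]

lemma angleLaw_real_lt_cos_pos {v : ℝ} (hv : v < 1) : 0 < angleLaw.real {θ | v < cos θ} := by
  have hopen : IsOpen ({θ | v < cos θ} ∩ Ioo (-π) π) :=
    (isOpen_lt continuous_const continuous_cos).inter isOpen_Ioo
  have hne : ({θ | v < cos θ} ∩ Ioo (-π) π).Nonempty :=
    ⟨0, by simpa using hv, neg_lt_zero.2 pi_pos, pi_pos⟩
  refine measureReal_nonneg.lt_of_ne' ((measureReal_ne_zero_iff).2 fun hnull ↦ ?_)
  have hae : ∀ᵐ θ : ℝ, θ ∈ Ioo (-π) π → ¬ v < cos θ :=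
    ae_angleLaw_iff.1 (measure_eq_zero_iff_ae_notMem.1 hnull)
  refine (hopen.measure_pos volume hne).ne' (measure_mono_null ?_ hae)
  exact fun θ hθ h ↦ h hθ.2 hθ.1

/-- The law of the first Cartesian coordinate `r cos θ` of a planar vector whose radius has law
`ν` and whose angle is independent and uniform. -/
noncomputable def abscissaLaw (ν : Measure ℝ) : Measure ℝ :=
  (ν.prod angleLaw).map fun p ↦ p.1 * cos p.2

lemma measurable_mul_cos : Measurable fun p : ℝ × ℝ ↦ p.1 * cos p.2 := by fun_prop

variable {ν : Measure ℝ}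

lemma survival_abscissaLaw (t : ℝ) :
    survival (abscissaLaw ν) t = (ν.prod angleLaw).real {p | t < p.1 * cos p.2} :=
  map_measureReal_apply measurable_mul_cos measurableSet_Ioi

lemma ae_prod_angleLaw_fst_pos (hν : ∀ᵐ r ∂ν, 0 < r) : ∀ᵐ p ∂ν.prod angleLaw, 0 < p.1 :=
  Measure.quasiMeasurePreserving_fst.ae hν

lemma nullSingletonClass_abscissaLaw (hν : ∀ᵐ r ∂ν, 0 < r) :
    NullSingletonClass (abscissaLaw ν) where
  measure_singleton c := by
    rw [abscissaLaw, Measure.map_apply measurable_mul_cos (measurableSet_singleton c),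
      Measure.measure_prod_null (measurable_mul_cos (measurableSet_singleton c))]
    filter_upwards [hν] with r hr
    refine measure_mono_null (fun θ hθ ↦ ?_) (ae_angleLaw_cos_ne (c / r))
    simpa [eq_div_iff hr.ne', mul_comm] using hθ

variable [IsProbabilityMeasure ν]

instance : IsProbabilityMeasure (abscissaLaw ν) :=
  Measure.isProbabilityMeasure_map measurable_mul_cos.aemeasurable

lemma survival_abscissaLaw_le (hν : ∀ᵐ r ∂ν, 0 < r) (t : ℝ) :
    survival (abscissaLaw ν) t ≤ survival ν t := by
  have hmono : {p : ℝ × ℝ | t < p.1 * cos p.2} ≤ᵐ[ν.prod angleLaw] Ioi t ×ˢ univ := by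
    filter_upwards [ae_prod_angleLaw_fst_pos hν] with p hp (ht : t < p.1 * cos p.2)
    exact ⟨ht.trans_le (mul_le_of_le_one_right hp.le (cos_le_one _)), mem_univ _⟩
  calc survival (abscissaLaw ν) t = (ν.prod angleLaw).real {p | t < p.1 * cos p.2} :=
        survival_abscissaLaw t
    _ ≤ (ν.prod angleLaw).real (Ioi t ×ˢ univ) :=
        ENNReal.toReal_mono (measure_ne_top _ _) (measure_mono_ae hmono)
    _ = survival ν t := by rw [measureReal_prod_prod, probReal_univ, mul_one, survival]

lemma survival_abscissaLaw_pos_iff (hν : ∀ᵐ r ∂ν, 0 < r) {t : ℝ} :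
    0 < survival (abscissaLaw ν) t ↔ 0 < survival ν t := by
  refine ⟨fun h ↦ h.trans_le (survival_abscissaLaw_le hν t), fun h ↦ ?_⟩
  have hmax : 0 < survival ν (max t 0) := by
    rcases max_choice t 0 with h' | h' <;> rw [h']
    exacts [h, survival_zero_pos hν]
  obtain ⟨s, hs, hpos⟩ := exists_lt_survival_pos hmax
  have hs0 : 0 < s := (le_max_right t 0).trans_lt hs
  calc 0 < ν.real (Ioi s) * angleLaw.real {θ | max t 0 / s < cos θ} :=
        mul_pos hpos (angleLaw_real_lt_cos_pos ((div_lt_one hs0).2 hs))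
    _ = (ν.prod angleLaw).real (Ioi s ×ˢ {θ | max t 0 / s < cos θ}) :=
        (measureReal_prod_prod _ _).symm
    _ ≤ (ν.prod angleLaw).real {p | t < p.1 * cos p.2} := by
        refine measureReal_mono ?_
        rintro ⟨r, θ⟩ ⟨hr, hθ⟩
        calc t ≤ max t 0 := le_max_left _ _
          _ = s * (max t 0 / s) := (mul_div_cancel₀ _ hs0.ne').symm
          _ ≤ r * (max t 0 / s) := by gcongr; exact hr.le
          _ < r * cos θ := mul_lt_mul_of_pos_left hθ (hs0.trans hr)
    _ = survival (abscissaLaw ν) t := (survival_abscissaLaw t).symm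

lemma upperEndpointFilter_abscissaLaw (hν : ∀ᵐ r ∂ν, 0 < r) :
    upperEndpointFilter (survival (abscissaLaw ν)) = upperEndpointFilter (survival ν) :=
  upperEndpointFilter_congr fun _ ↦ survival_abscissaLaw_pos_iff hν

end PolarLaw

section AngularSection

/-- Polar coordinates `(r, θ)` of the joint exceedance event `X > c`, `ρ |X| + τ Y > d` for
`X = r cos θ` and `Y = r sin θ`. -/
def halfSkewTail (c d ρ τ : ℝ) : Set (ℝ × ℝ) :=
  {p | c < p.1 * cos p.2 ∧ d < ρ * |p.1 * cos p.2| + τ * (p.1 * sin p.2)}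

lemma measurableSet_halfSkewTail (c d ρ τ : ℝ) : MeasurableSet (halfSkewTail c d ρ τ) := by
  simp only [halfSkewTail, ofPred_and]
  exact (measurableSet_lt (by fun_prop) (by fun_prop)).inter
    (measurableSet_lt (by fun_prop) (by fun_prop))

lemma halfSkewTail_self (c : ℝ) : halfSkewTail c c 1 0 = {p | c < p.1 * cos p.2} := by
  ext p
  simp only [halfSkewTail, mem_ofPred_eq, one_mul, zero_mul, add_zero, and_iff_left_iff_imp]
  exact fun h ↦ h.trans_le (le_abs_self _)

/-- The probability, for a radius of law `ν`, of the section of `S` at the angle `θ`. -/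
noncomputable def sectionProb (ν : Measure ℝ) (S : Set (ℝ × ℝ)) (θ : ℝ) : ℝ :=
  ν.real {r | (r, θ) ∈ S}

/-- The section probability of the exceedance event at thresholds `u + a x`, `u + a y`, as a
function of the angle measured in the scale `√(2 a / u)` on which it varies; it vanishes for
angles outside `(-π, π)`. -/
noncomputable def rescaledSection (ν : Measure ℝ) (a u x y ρ τ φ : ℝ) : ℝ :=
  (Ioo (-π) π).indicator (sectionProb ν (halfSkewTail (a * x + u) (a * y + u) ρ τ))
    (√(2 / (u / a)) * φ)

variable {ν : Measure ℝ}

lemma measurable_sectionProb [SFinite ν] {S : Set (ℝ × ℝ)} (hS : MeasurableSet S) :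
    Measurable (sectionProb ν S) :=
  (measurable_measure_prodMk_right hS).ennreal_toReal

lemma prod_angleLaw_real [IsFiniteMeasure ν] {S : Set (ℝ × ℝ)} (hS : MeasurableSet S) :
    (ν.prod angleLaw).real S = (2 * π)⁻¹ * ∫ θ in Ioo (-π) π, sectionProb ν S θ := by
  have hsection : (ν.prod angleLaw).real S = ∫ θ, sectionProb ν S θ ∂angleLaw := by
    rw [measureReal_def, Measure.prod_apply_symm hS, ← integral_toReal
      (measurable_measure_prodMk_right hS).aemeasurable (by simp)]
    rfl
  rw [hsection, angleLaw, integral_smul_measure, ENNReal.toReal_inv,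
    ENNReal.toReal_ofReal (by positivity), smul_eq_mul]

lemma prod_angleLaw_real_halfSkewTail [IsFiniteMeasure ν] {a u : ℝ} (ha : 0 < a) (hu : 0 < u)
    (x y ρ τ : ℝ) :
    (ν.prod angleLaw).real (halfSkewTail (a * x + u) (a * y + u) ρ τ) =
      √(2 / (u / a)) / (2 * π) * ∫ φ, rescaledSection ν a u x y ρ τ φ := by
  have hσ : 0 < √(2 / (u / a)) := by positivity
  simp only [rescaledSection]
  rw [prod_angleLaw_real (measurableSet_halfSkewTail _ _ _ _), Measure.integral_comp_mul_left,
    integral_indicator measurableSet_Ioo, abs_of_pos (inv_pos.2 hσ), smul_eq_mul]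
  field_simp

lemma sectionProb_halfSkewTail_eq (hν : ∀ᵐ r ∂ν, 0 < r) {c d ρ τ θ : ℝ} (hcos : 0 < cos θ)
    (hskew : 0 < ρ * cos θ + τ * sin θ) :
    sectionProb ν (halfSkewTail c d ρ τ) θ =
      survival ν (max (c / cos θ) (d / (ρ * cos θ + τ * sin θ))) := by
  refine measureReal_congr ?_
  filter_upwards [hν] with r hr
  refine propext ?_
  change _ ∧ _ ↔ max _ _ < r
  rw [max_lt_iff, div_lt_iff₀ hcos, div_lt_iff₀ hskew, abs_of_pos (mul_pos hr hcos)]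
  ring_nf

lemma sectionProb_halfSkewTail_le [IsFiniteMeasure ν] (hν : ∀ᵐ r ∂ν, 0 < r) {c d ρ τ θ : ℝ}
    (hθ : θ ∈ Ioo (-π) π) (hc : 0 < c) :
    sectionProb ν (halfSkewTail c d ρ τ) θ ≤ survival ν (c * (1 + θ ^ 2 / 5)) := by
  refine ENNReal.toReal_mono (measure_ne_top _ _) (measure_mono_ae ?_)
  filter_upwards [hν] with r hr hmem
  exact mul_one_add_sq_div_lt_of_lt_mul_cos hθ hr hc hmem.1

variable {a u x y ρ τ : ℝ}

lemma measurable_rescaledSection [SFinite ν] : Measurable (rescaledSection ν a u x y ρ τ) :=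
  ((measurable_sectionProb (measurableSet_halfSkewTail _ _ _ _)).indicator
    measurableSet_Ioo).comp (measurable_const_mul _)

lemma rescaledSection_nonneg (φ : ℝ) : 0 ≤ rescaledSection ν a u x y ρ τ φ :=
  indicator_nonneg (fun _ _ ↦ measureReal_nonneg) _

lemma rescaledSection_le [IsFiniteMeasure ν] (hν : ∀ᵐ r ∂ν, 0 < r) (ha : 0 < a) (hu : 0 < u)
    (hx : 2 * |x| ≤ u / a) (φ : ℝ) :
    rescaledSection ν a u x y ρ τ φ ≤ survival ν (u + a * (x + φ ^ 2 / 5)) := by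
  rw [rescaledSection]
  by_cases hφ : √(2 / (u / a)) * φ ∈ Ioo (-π) π
  · have hhalf : u / 2 ≤ a * x + u := by
      rw [le_div_iff₀ ha] at hx
      nlinarith [neg_abs_le x]
    rw [indicator_of_mem hφ]
    refine (sectionProb_halfSkewTail_le hν hφ (by linarith)).trans (antitone_survival ?_)
    calc u + a * (x + φ ^ 2 / 5)
        = a * x + u + u / 2 * (2 / (u / a) * φ ^ 2 / 5) := by field_simp; ring
      _ ≤ a * x + u + (a * x + u) * (2 / (u / a) * φ ^ 2 / 5) := by gcongr
      _ = (a * x + u) * (1 + (√(2 / (u / a)) * φ) ^ 2 / 5) := by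
          rw [mul_pow, sq_sqrt (by positivity)]
          ring
  · rw [indicator_of_notMem hφ]
    exact survival_nonneg

lemma rescaledSection_eq (hν : ∀ᵐ r ∂ν, 0 < r) (ha : 0 < a) {φ θ : ℝ}
    (hφ : √(2 / (u / a)) * φ = θ) (hθ : θ ∈ Ioo (-π) π) (hcos : 0 < cos θ)
    (hskew : 0 < ρ * cos θ + τ * sin θ) :
    rescaledSection ν a u x y ρ τ φ = survival ν (u + a * max ((x + u / a * (1 - cos θ)) / cos θ)
      ((y + u / a * (1 - (ρ * cos θ + τ * sin θ))) / (ρ * cos θ + τ * sin θ))) := by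
  have hthreshold : ∀ z D : ℝ, 0 < D → u + a * ((z + u / a * (1 - D)) / D) = (a * z + u) / D :=
    fun z D hD ↦ by field_simp; ring
  rw [rescaledSection, hφ, indicator_of_mem hθ, sectionProb_halfSkewTail_eq hν hcos hskew,
    mul_max_of_nonneg _ _ ha.le, ← max_add_add_left, hthreshold x _ hcos, hthreshold y _ hskew]

lemma integral_exp_neg_add_sq (c : ℝ) : ∫ φ : ℝ, exp (-(c + φ ^ 2)) = exp (-c) * √π := by
  have hsplit : ∀ φ : ℝ, exp (-(c + φ ^ 2)) = exp (-c) * exp (-1 * φ ^ 2) := fun φ ↦ by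
    rw [← exp_add]
    ring_nf
  simp only [hsplit]
  rw [integral_const_mul, integral_gaussian, div_one]

end AngularSection

section JointTail

variable {ν : Measure ℝ} [IsProbabilityMeasure ν] {α : ℝ → ℝ}

lemma exists_eventually_rescaledSection_div_le (hν : ∀ᵐ r ∂ν, 0 < r) (hα : ∀ u, 0 < α u)
    (hG : IsGumbelTail (survival ν) α) (x : ℝ) :
    ∃ K, ∀ᶠ u in upperEndpointFilter (survival ν), ∀ y ρ τ φ,
      rescaledSection ν (α u) u x y ρ τ φ / survival ν u ≤ K * (1 + φ ^ 2)⁻¹ := by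
  have hq := hG.tendsto_div_scale_atTop antitone_survival hα (survival_zero_pos hν)
  obtain ⟨K, hK, hdecay⟩ := hG.exists_eventually_le_div_one_add antitone_survival hα x
  refine ⟨5 * K, ?_⟩
  filter_upwards [hdecay, eventually_pos_upperEndpointFilter, hq.eventually_gt_atTop 0,
    hq.eventually_ge_atTop (2 * |x|)] with u hdecay hpos hqpos hx y ρ τ φ
  have hu : 0 < u := (div_pos_iff_of_pos_right (hα u)).1 hqpos
  rw [div_le_iff₀ hpos]
  calc rescaledSection ν (α u) u x y ρ τ φ
      ≤ survival ν (u + α u * (x + φ ^ 2 / 5)) := rescaledSection_le hν (hα u) hu hx φ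
    _ ≤ K / (1 + φ ^ 2 / 5) * survival ν u := hdecay _ (by positivity)
    _ ≤ 5 * K * (1 + φ ^ 2)⁻¹ * survival ν u := by
        gcongr
        rw [← div_eq_mul_inv, div_le_div_iff₀ (by positivity) (by positivity)]
        nlinarith [sq_nonneg φ]

variable {ι : Type*} {L : Filter ι} {u ρ τ : ι → ℝ}

lemma tendsto_rescaledSection_div (hν : ∀ᵐ r ∂ν, 0 < r) (hα : ∀ u, 0 < α u)
    (hG : IsGumbelTail (survival ν) α) (hu : Tendsto u L (upperEndpointFilter (survival ν)))
    (hρ : Tendsto (fun i ↦ (1 - ρ i) * (u i / α (u i))) L (𝓝 0))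
    (hτ : Tendsto (fun i ↦ τ i ^ 2 * (u i / α (u i))) L (𝓝 0)) (x y φ : ℝ) :
    Tendsto (fun i ↦ rescaledSection ν (α (u i)) (u i) x y (ρ i) (τ i) φ / survival ν (u i)) L
      (𝓝 (exp (-(max x y + φ ^ 2)))) := by
  have hq : Tendsto (fun i ↦ u i / α (u i)) L atTop :=
    (hG.tendsto_div_scale_atTop antitone_survival hα (survival_zero_pos hν)).comp hu
  have hcos := tendsto_mul_one_sub_cos hq φ
  have hskew := tendsto_mul_one_sub_cos_add_sin hq hρ hτ φ
  have hthreshold := (tendsto_add_mul_one_sub_div hq hcos x).max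
    (tendsto_add_mul_one_sub_div hq hskew y)
  rw [max_add_add_right] at hthreshold
  refine ((hG.tendsto_div_prod_nhds antitone_survival hα _).comp
    (hu.prodMk hthreshold)).congr' ?_
  filter_upwards [(tendsto_one_of_mul_one_sub hq hcos).eventually_const_lt one_pos,
    (tendsto_one_of_mul_one_sub hq hskew).eventually_const_lt one_pos,
    (tendsto_sqrt_two_div_mul hq φ).eventually (Ioo_mem_nhds (neg_lt_zero.2 pi_pos) pi_pos)]
    with i hcospos hskewpos hθ
  rw [rescaledSection_eq hν (hα _) rfl hθ hcospos hskewpos, Function.comp_apply]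

lemma tendsto_integral_rescaledSection_div [L.IsCountablyGenerated] (hν : ∀ᵐ r ∂ν, 0 < r)
    (hα : ∀ u, 0 < α u) (hG : IsGumbelTail (survival ν) α)
    (hu : Tendsto u L (upperEndpointFilter (survival ν)))
    (hρ : Tendsto (fun i ↦ (1 - ρ i) * (u i / α (u i))) L (𝓝 0))
    (hτ : Tendsto (fun i ↦ τ i ^ 2 * (u i / α (u i))) L (𝓝 0)) (x y : ℝ) :
    Tendsto (fun i ↦ (∫ φ, rescaledSection ν (α (u i)) (u i) x y (ρ i) (τ i) φ) /
      survival ν (u i)) L (𝓝 (exp (-max x y) * √π)) := by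
  obtain ⟨K, hK⟩ := exists_eventually_rescaledSection_div_le hν hα hG x
  simp only [← integral_div, ← integral_exp_neg_add_sq]
  refine tendsto_integral_filter_of_dominated_convergence (fun φ ↦ K * (1 + φ ^ 2)⁻¹)
    (Eventually.of_forall fun i ↦ (measurable_rescaledSection.div_const _).aestronglyMeasurable)
    ?_ (integrable_inv_one_add_sq.const_mul K)
    (Eventually.of_forall (tendsto_rescaledSection_div hν hα hG hu hρ hτ x y))
  filter_upwards [hu.eventually hK] with i hi
  refine Eventually.of_forall fun φ ↦ ?_
  rw [norm_of_nonneg (div_nonneg (rescaledSection_nonneg φ) survival_nonneg)]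
  exact hi y (ρ i) (τ i) φ

-- The marginal tail is the case `x = y = 0`, `ρ = 1`, `τ = 0` of the joint one, so the common
-- normalisation `√(2 α u / u) / (2 π) * survival ν u` cancels.
lemma tendsto_halfSkewTail_div_survival [L.IsCountablyGenerated] (hν : ∀ᵐ r ∂ν, 0 < r)
    (hα : ∀ u, 0 < α u) (hG : IsGumbelTail (survival ν) α)
    (hu : Tendsto u L (upperEndpointFilter (survival ν)))
    (hρ : Tendsto (fun i ↦ (1 - ρ i) * (u i / α (u i))) L (𝓝 0))
    (hτ : Tendsto (fun i ↦ τ i ^ 2 * (u i / α (u i))) L (𝓝 0)) (x y : ℝ) :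
    Tendsto (fun i ↦ (ν.prod angleLaw).real
        (halfSkewTail (α (u i) * x + u i) (α (u i) * y + u i) (ρ i) (τ i)) /
          survival (abscissaLaw ν) (u i)) L (𝓝 (exp (-max x y))) := by
  have hq : Tendsto (fun i ↦ u i / α (u i)) L atTop :=
    (hG.tendsto_div_scale_atTop antitone_survival hα (survival_zero_pos hν)).comp hu
  have hjoint := tendsto_integral_rescaledSection_div hν hα hG hu hρ hτ x y
  have hmarginal := tendsto_integral_rescaledSection_div (ρ := fun _ ↦ 1) (τ := fun _ ↦ 0)
    hν hα hG hu (by simp [tendsto_const_nhds]) (by simp [tendsto_const_nhds]) 0 0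
  have hlim := hjoint.div hmarginal (by positivity)
  rw [max_self, neg_zero, exp_zero, one_mul, mul_div_cancel_right₀ _ (by positivity)] at hlim
  refine hlim.congr' ?_
  filter_upwards [hq.eventually_gt_atTop 0, hu.eventually eventually_pos_upperEndpointFilter]
    with i hqpos hpos
  have hui : 0 < u i := (div_pos_iff_of_pos_right (hα _)).1 hqpos
  have htail : survival (abscissaLaw ν) (u i) = √(2 / (u i / α (u i))) / (2 * π) *
      ∫ φ, rescaledSection ν (α (u i)) (u i) 0 0 1 0 φ := by
    rw [← prod_angleLaw_real_halfSkewTail (hα _) hui, mul_zero, zero_add, halfSkewTail_self,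
      survival_abscissaLaw]
  rw [Pi.div_apply, div_div_div_cancel_right₀ hpos.ne', htail,
    prod_angleLaw_real_halfSkewTail (hα _) hui, mul_div_mul_left _ _ (by positivity)]

end JointTail

theorem joint_tail_half_skew_gumbel_lambda_zero_general {Ω : Type*} [MeasurableSpace Ω]
    {μ : Measure Ω} {R Θ : Ω → ℝ} {ν : Measure ℝ} [IsProbabilityMeasure ν]
    (hlaw : HasLaw (fun ω ↦ (R ω, Θ ω)) (ν.prod angleLaw) μ) (hν : ∀ᵐ r ∂ν, 0 < r)
    {α : ℝ → ℝ} (hα : ∀ u, 0 < α u) (hG : IsGumbelTail (survival ν) α) {b : ℕ → ℝ}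
    (hb : ∀ n : ℕ, b n = sInf {x | 1 - 1 / (n : ℝ) < μ.real {ω | R ω * cos (Θ ω) ≤ x}})
    {ρ τ : ℕ → ℝ} (hρ : Tendsto (fun n ↦ (1 - ρ n) * (b n / α (b n))) atTop (𝓝 0))
    (hτ : Tendsto (fun n ↦ τ n ^ 2 * (b n / α (b n))) atTop (𝓝 0)) (x y : ℝ) :
    Tendsto (fun n : ℕ ↦ (n : ℝ) * μ.real {ω | α (b n) * x + b n < R ω * cos (Θ ω) ∧
        α (b n) * y + b n < ρ n * |R ω * cos (Θ ω)| + τ n * (R ω * sin (Θ ω))})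
      atTop (𝓝 (exp (-max x y))) := by
  have := nullSingletonClass_abscissaLaw hν
  have hcdf : ∀ t, μ.real {ω | R ω * cos (Θ ω) ≤ t} = cdf (abscissaLaw ν) t := fun t ↦ by
    rw [cdf_eq_real, abscissaLaw, map_measureReal_apply measurable_mul_cos measurableSet_Iic]
    exact hlaw.measureReal_eq (measurable_mul_cos measurableSet_Iic)
  simp only [hcdf] at hb
  obtain rfl : b = fun n : ℕ ↦ sInf {x | 1 - 1 / (n : ℝ) < cdf (abscissaLaw ν) x} := funext hb
  have hb_lim := tendsto_quantile_upperEndpointFilter (ν := abscissaLaw ν)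
  rw [upperEndpointFilter_abscissaLaw hν] at hb_lim
  refine (tendsto_halfSkewTail_div_survival hν hα hG hb_lim hρ hτ x y).congr' ?_
  filter_upwards [eventually_survival_quantile (ν := abscissaLaw ν)] with n hn
  rw [hn, div_div_eq_mul_div, div_one, mul_comm]
  exact congrArg _ (hlaw.measureReal_eq (measurableSet_halfSkewTail _ _ _ _)).symm

theorem joint_tail_half_skew_gumbel_lambda_zero
{Ω : Type*} [MeasurableSpace Ω] (μ : Measure Ω) [IsProbabilityMeasure μ]
    (R Θ : Ω → ℝ) (hRm : Measurable R) (hΘm : Measurable Θ)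
    (hRpos : ∀ᵐ ω ∂μ, 0 < R ω)
    (hΘunif : μ.map Θ = (ENNReal.ofReal (2 * π))⁻¹ • volume.restrict (Ioo (-π) π))
    (hindep : IndepFun R Θ μ)
    (X Y : Ω → ℝ)
    (hX : X = fun ω => R ω * Real.cos (Θ ω))
    (hY : Y = fun ω => R ω * Real.sin (Θ ω))
    (F G : ℝ → ℝ)
    (hF : F = fun x => (μ {ω | R ω ≤ x}).toReal)
    (hG : G = fun x => (μ {ω | X ω ≤ x}).toReal)
    (w : ℝ → ℝ) (hw : ∀ x, 0 < w x)
    (l : Filter ℝ)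
    (hendpoint : (l = atTop ∧ ∀ x, F x < 1) ∨
      (l = nhdsWithin 1 (Iio 1) ∧ (∀ x < 1, F x < 1) ∧ ∀ x, 1 ≤ x → F x = 1))
    (hGumbel : ∀ s : ℝ,
      Tendsto (fun u => (1 - F (u + s / w u)) / (1 - F u)) l (𝓝 (Real.exp (-s))))
    (b a : ℕ → ℝ)
    (hb : ∀ n : ℕ, b n = sInf {x | 1 - 1 / (n : ℝ) < G x})
    (ha : ∀ n : ℕ, a n = 1 / w (b n))
    (ρ : ℕ → ℝ) (hρ : ∀ n, ρ n ∈ Ioc (0 : ℝ) 1)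
    (hHR : Tendsto (fun n : ℕ => (1 - ρ n) * b n / a n) atTop (𝓝 0)) :
    ∀ x y : ℝ,
      Tendsto (fun n : ℕ =>
          (n : ℝ) * (μ {ω | a n * x + b n < X ω ∧
            a n * y + b n < ρ n * |X ω| + Real.sqrt (1 - ρ n ^ 2) * Y ω}).toReal)
        atTop (𝓝 (Real.exp (-max x y))) := by
  subst hX hY
  have := Measure.isProbabilityMeasure_map (μ := μ) hRm.aemeasurable
  have hlaw : HasLaw (fun ω ↦ (R ω, Θ ω)) ((μ.map R).prod angleLaw) μ :=
    ⟨by fun_prop, by rw [(indepFun_iff_map_prod_eq_prod_map_map hRm.aemeasurable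
      hΘm.aemeasurable).1 hindep, hΘunif, angleLaw]⟩
  have hν : ∀ᵐ r ∂μ.map R, 0 < r := (ae_map_iff hRm.aemeasurable measurableSet_Ioi).2 hRpos
  have hsurvival : survival (μ.map R) = fun x ↦ 1 - F x := by
    funext x
    rw [survival_eq_one_sub_cdf, cdf_eq_real, map_measureReal_apply hRm measurableSet_Iic, hF]
    rfl
  have htail : IsGumbelTail (survival (μ.map R)) (fun u ↦ 1 / w u) := fun s ↦ by
    rw [hsurvival, upperEndpointFilter_one_sub_eq hendpoint]
    simpa only [one_div_mul_eq_div] using hGumbel s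
  obtain rfl : a = fun n ↦ 1 / w (b n) := funext ha
  simp only [mul_div_assoc] at hHR
  subst hG
  exact joint_tail_half_skew_gumbel_lambda_zero_general hlaw hν
    (fun u ↦ one_div_pos.2 (hw u)) htail hb hHR
    (tendsto_sqrt_one_sub_sq_sq_mul_zero
      (fun n ↦ abs_le.2 ⟨by linarith [(hρ n).1], (hρ n).2⟩) hHR)
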